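/- Let n ≥ 3. Consider the three curve-germs in ℝ^{2n} (coordinates (p₁,q₁,p₂,q₂,p₃,q₃,…,pₙ,qₙ), all unlisted coordinates equal to 0): C₁(t) = (t³, 0, −t², 0, 0, 0, …, 0), B₊(t) = (t², (1/3)t³, 0, 0, t, 0, …, 0) and B₋(t) = (−t², (1/3)t³, 0, 0, t, 0, …, 0) (the class (T₈)^{6,2}). Then Lt(C₁,B₊,B₋) = 4, Lt(C₁) = ∞, and Lt(B₊,B₋) = 4. -/

import Mathlib

noncomputable section

/-- The order of vanishing at `0` of a function `h : ℝ → ℝ`: the least `k ≥ 1` such that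
the `k`-th derivative of `h` at `0` is nonzero, and `∞` if all derivatives vanish at `0`. -/
def vanishOrder (h : ℝ → ℝ) : ℕ∞ :=
  sInf {k : ℕ∞ | ∃ m : ℕ, k = m ∧ 1 ≤ m ∧ iteratedDeriv m h 0 ≠ 0}

/-- The standard symplectic form `ω = ∑ dpᵢ ∧ dqᵢ` on `ℝ^{2n}`, where the coordinates are
ordered as `(p₁, q₁, …, pₙ, qₙ)` (so `pᵢ` has index `2(i-1)` and `qᵢ` has index `2(i-1)+1`). -/
def stdSymp (n : ℕ) (u v : Fin (2 * n) → ℝ) : ℝ :=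
  ∑ i : Fin n,
    (u ⟨2 * i.val, by have := i.isLt; omega⟩ * v ⟨2 * i.val + 1, by have := i.isLt; omega⟩ -
     u ⟨2 * i.val + 1, by have := i.isLt; omega⟩ * v ⟨2 * i.val, by have := i.isLt; omega⟩)

/-- A germ at `0` of a smooth Lagrangian submanifold of `(ℝ^{2n}, ω)`, given by `n` smooth
functions `H₁, …, Hₙ` vanishing at `0`, whose differentials are linearly independent at the
points of `{H₁ = ⋯ = Hₙ = 0}` near `0`, and such that `ω` vanishes on `ker DH(x)` at every
such point. -/
structure LagrangianGerm (n : ℕ) : Type where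
  H : Fin n → (Fin (2 * n) → ℝ) → ℝ
  smooth : ∀ i, ContDiff ℝ (⊤ : ℕ∞) (H i)
  zero_at_zero : ∀ i, H i 0 = 0
  lagrangian : ∃ U : Set (Fin (2 * n) → ℝ), IsOpen U ∧ 0 ∈ U ∧
    ∀ x ∈ U, (∀ i, H i x = 0) →
      LinearIndependent ℝ (fun i => fderiv ℝ (H i) x) ∧
      ∀ u v : Fin (2 * n) → ℝ, (∀ i, fderiv ℝ (H i) x u = 0) →
        (∀ i, fderiv ℝ (H i) x v = 0) → stdSymp n u v = 0

/-- The tangency order `t(f, L)` of a curve `f` to a Lagrangian submanifold-germ `L`: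
the minimum over `i` of the order of vanishing at `0` of `Hᵢ ∘ f`. -/
def tOrd {n : ℕ} (f : ℝ → Fin (2 * n) → ℝ) (L : LagrangianGerm n) : ℕ∞ :=
  ⨅ i : Fin n, vanishOrder (fun t => L.H i (f t))

/-- The Lagrangian tangency order `Lt(f)` of a curve `f`. -/
def Lt1 {n : ℕ} (f : ℝ → Fin (2 * n) → ℝ) : ℕ∞ :=
  ⨆ L : LagrangianGerm n, tOrd f L

/-- The Lagrangian tangency order `Lt(f, g)` of a multi-germ of two curves. -/
def Lt2 {n : ℕ} (f g : ℝ → Fin (2 * n) → ℝ) : ℕ∞ :=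
  ⨆ L : LagrangianGerm n, min (tOrd f L) (tOrd g L)

/-- The Lagrangian tangency order `Lt(f, g, h)` of a multi-germ of three curves. -/
def Lt3 {n : ℕ} (f g h : ℝ → Fin (2 * n) → ℝ) : ℕ∞ :=
  ⨆ L : LagrangianGerm n, min (tOrd f L) (min (tOrd g L) (tOrd h L))

/-!
For the upper bound write `B± = γ ± t² b` with `γ = (0, t³/3, 0, 0, t, 0, …)` and `b = ∂/∂p₁`, and
suppose that `L` is tangent to both curves to an order greater than `4`. Parametrize `L` by a map
`Ψ` and expand `Ψ` to second order along the preimages of the two curves. The sum of the two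
expansions gives a curve `c` in `L` with `c = γ + O(t⁴)`, and their difference gives a vector field
along `c`, tangent to `L`, of the form `b + o(t²)`. As `ω` vanishes on `L`, pairing this field with
the velocity of `c` gives `d/dt ω(c, b) = o(t²)`, so `ω(γ, b) = o(t³)`; but `ω(γ, b) = -t³/3`.

For the lower bound take `L = {q = dS(p)}` with `S = p₁ p₃³ / 3`, that is, `q₁ = p₃³ / 3`,
`q₃ = p₁ p₃²` and all other `qᵢ = 0`. It contains `C₁`, and on `B±` its equations reduce to
`∓t⁴` in the coordinate `q₃` and to `0` in the others.
-/

open Filter Topology Asymptotics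
open scoped ContDiff

section Calculus

variable {V W : Type*} [NormedAddCommGroup V] [NormedSpace ℝ V]
  [NormedAddCommGroup W] [NormedSpace ℝ W]

lemma isLittleO_sub_of_hasFDerivAt_snd {X : Type*} {l : Filter X} {G : X → W → V}
    {G' : X → W → W →L[ℝ] V} {k : ℕ}
    (hG : ∀ᶠ p in l ×ˢ 𝓝 0, HasFDerivAt (G p.1) (G' p.1 p.2) p.2)
    (hG' : (fun p : X × W => G' p.1 p.2) =o[l ×ˢ 𝓝 0] fun p => ‖p.2‖ ^ k) :
    (fun p : X × W => G p.1 p.2 - G p.1 0) =o[l ×ˢ 𝓝 0] fun p => ‖p.2‖ ^ (k + 1) := by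
  refine isLittleO_iff.2 fun ε hε => ?_
  obtain ⟨s, hs, P, hP, hsP⟩ := eventually_prod_iff.1 (hG.and (isLittleO_iff.1 hG' hε))
  obtain ⟨r, hr, hball⟩ := Metric.eventually_nhds_iff_ball.1 hP
  filter_upwards [hs.prod_mk (Metric.ball_mem_nhds 0 hr)] with ⟨x, y⟩ ⟨hx, hy⟩
  have good : ∀ z ∈ Metric.closedBall (0 : W) ‖y‖,
      HasFDerivAt (G x) (G' x z) z ∧ ‖G' x z‖ ≤ ε * ‖y‖ ^ k := fun z hz => by
    rw [mem_closedBall_zero_iff] at hz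
    obtain ⟨hder, hbound⟩ := hsP hx (hball z
      (mem_ball_zero_iff.2 (hz.trans_lt (mem_ball_zero_iff.1 hy))))
    rw [norm_pow, norm_norm] at hbound
    exact ⟨hder, hbound.trans (by gcongr)⟩
  have mean_value := (convex_closedBall (0 : W) ‖y‖).norm_image_sub_le_of_norm_hasFDerivWithin_le
    (fun z hz => (good z hz).1.hasFDerivWithinAt) (fun z hz => (good z hz).2)
    (x := 0) (y := y) (by simp) (by simp)
  simpa [pow_succ, mul_assoc] using mean_value

lemma isLittleO_pow_succ_of_hasDerivAt {φ φ' : ℝ → V} {k : ℕ}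
    (hφ : ∀ᶠ t in 𝓝 0, HasDerivAt φ (φ' t) t) (hφ' : φ' =o[𝓝 0] fun t : ℝ => t ^ k) :
    (fun t => φ t - φ 0) =o[𝓝 0] fun t : ℝ => t ^ (k + 1) := by
  obtain ⟨r, hr, hball⟩ := Metric.eventually_nhds_iff_ball.1 hφ
  have nhds_ball : 𝓝[Metric.ball (0 : ℝ) r] 0 = 𝓝 0 :=
    Metric.isOpen_ball.nhdsWithin_eq (Metric.mem_ball_self hr)
  have := (convex_ball (0 : ℝ) r).isLittleO_pow_succ_real (Metric.mem_ball_self hr)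
    (fun t ht => (hball t ht).hasDerivWithinAt) (n := k) (by simpa [nhds_ball] using hφ')
  simpa [nhds_ball] using this

lemma isLittleO_pow_of_iteratedDeriv_eq_zero {h : ℝ → V} {m : ℕ} (hh : ContDiff ℝ m h)
    (hzero : ∀ k ≤ m, iteratedDeriv k h 0 = 0) : h =o[𝓝 0] fun t : ℝ => t ^ m := by
  have taylor_eq_zero (t : ℝ) : taylorWithinEval h m Set.univ 0 t = 0 := by
    rw [taylor_within_apply]
    refine Finset.sum_eq_zero fun k hk => ?_
    rw [iteratedDerivWithin_univ, hzero k (Finset.mem_range_succ_iff.1 hk), smul_zero]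
  simpa [taylor_eq_zero] using taylor_isLittleO_univ hh (x₀ := 0)

lemma isLittleO_taylor_two {Φ : W → V} {x₀ : W} (hΦ : ContDiffAt ℝ 2 Φ x₀) :
    (fun p : W × W => Φ (p.1 + p.2) - Φ p.1 - fderiv ℝ Φ p.1 p.2 -
      (1 / 2 : ℝ) • fderiv ℝ (fderiv ℝ Φ) x₀ p.2 p.2) =o[𝓝 (x₀, 0)] fun p => ‖p.2‖ ^ 2 := by
  set A := fderiv ℝ (fderiv ℝ Φ) x₀
  have symm : ∀ u v, A u v = A v u := hΦ.isSymmSndFDerivAt (by simp)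
  have hadd : Tendsto (fun p : W × W => p.1 + p.2) (𝓝 (x₀, 0)) (𝓝 x₀) := by
    simpa using (continuous_add (M := W)).tendsto (x₀, 0)
  have hΦ' : HasStrictFDerivAt (fderiv ℝ Φ) A x₀ :=
    (hΦ.fderiv_right (m := 1) (by norm_num)).hasStrictFDerivAt one_ne_zero
  have deriv_remainder : (fun p : W × W => fderiv ℝ Φ (p.1 + p.2) - fderiv ℝ Φ p.1 - A p.2)
      =o[𝓝 x₀ ×ˢ 𝓝 0] fun p => ‖p.2‖ ^ 1 := by
    rw [← nhds_prod_eq]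
    simpa [Function.comp_def] using
      (hΦ'.isLittleO.comp_tendsto (hadd.prodMk_nhds (continuous_fst.tendsto (x₀, 0)))).norm_right
  have hasFDerivAt_remainder : ∀ᶠ p : W × W in 𝓝 x₀ ×ˢ 𝓝 0,
      HasFDerivAt (fun y => Φ (p.1 + y) - Φ p.1 - fderiv ℝ Φ p.1 y - (1 / 2 : ℝ) • A y y)
        (fderiv ℝ Φ (p.1 + p.2) - fderiv ℝ Φ p.1 - A p.2) p.2 := by
    rw [← nhds_prod_eq]
    filter_upwards [hadd.eventually (hΦ.eventually (by simp))] with p hp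
    have hquad : HasFDerivAt (fun y => (1 / 2 : ℝ) • A y y) (A p.2) p.2 := by
      refine ((A.hasFDerivAt.clm_apply (hasFDerivAt_id p.2)).const_smul (1 / 2 : ℝ)).congr_fderiv ?_
      ext u
      simp [symm u, ← two_smul ℝ]
    have hshift := (hasFDerivAt_comp_add_left p.1).2 (hp.differentiableAt two_ne_zero).hasFDerivAt
    exact ((hshift.sub_const _).sub (fderiv ℝ Φ p.1).hasFDerivAt).sub hquad
  simpa [nhds_prod_eq] using isLittleO_sub_of_hasFDerivAt_snd
    (G := fun x y => Φ (x + y) - Φ x - fderiv ℝ Φ x y - (1 / 2 : ℝ) • A y y)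
    (G' := fun x y => fderiv ℝ Φ (x + y) - fderiv ℝ Φ x - A y)
    hasFDerivAt_remainder deriv_remainder

end Calculus

section LevelSet

variable {V W E : Type*} [NormedAddCommGroup V] [NormedSpace ℝ V]
  [NormedAddCommGroup W] [NormedSpace ℝ W] [NormedAddCommGroup E] [NormedSpace ℝ E]

lemma exists_levelSet_parametrization [CompleteSpace V] [FiniteDimensional ℝ E]
    {H : V → E} {x₀ : V} {r : ℕ∞ω} (hr : r ≠ 0) (hH : ContDiffAt ℝ r H x₀)
    (hsurj : Function.Surjective (fderiv ℝ H x₀)) :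
    ∃ (Ψ : (fderiv ℝ H x₀).ker → V) (π : V →L[ℝ] (fderiv ℝ H x₀).ker),
      ContDiffAt ℝ r Ψ 0 ∧ Ψ 0 = x₀ ∧ (∀ᶠ z in 𝓝 0, H (Ψ z) = H x₀) ∧
      (fun x => Ψ (π (x - x₀)) - x) =O[𝓝 x₀] fun x => H x - H x₀ := by
  have := FiniteDimensional.complete ℝ E
  let φ := HasStrictFDerivAt.implicitFunctionDataOfComplemented H (fderiv ℝ H x₀)
    (hH.hasStrictFDerivAt hr) (LinearMap.range_eq_top.2 hsurj)
    (fderiv ℝ H x₀).ker_closedComplemented_of_finiteDimensional_range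
  let P := φ.implicitFunction.uncurry
  have φ_pt : φ.prodFun φ.pt = (H x₀, 0) := by simp [φ]
  have hP : ContDiffAt ℝ r P (H x₀, 0) := by
    rw [← φ_pt]
    exact φ.contDiffAt_implicitFunction hH
      (φ.rightDeriv.contDiff.contDiffAt.comp x₀ (contDiffAt_id.sub contDiffAt_const)) hr
  have left_inverse : ∀ᶠ x in 𝓝 x₀, P (H x, φ.rightDeriv (x - x₀)) = x :=
    φ.implicitFunction_apply_image
  have slice : Tendsto (fun z : (fderiv ℝ H x₀).ker => (H x₀, z)) (𝓝 0) (𝓝 (H x₀, 0)) :=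
    tendsto_const_nhds.prodMk_nhds tendsto_id
  have π_tendsto : Tendsto (fun x => φ.rightDeriv (x - x₀)) (𝓝 x₀) (𝓝 0) :=
    Continuous.tendsto' (by fun_prop) _ _ (by simp)
  refine ⟨fun z => P (H x₀, z), φ.rightDeriv, hP.comp 0 (by fun_prop),
    by simpa using left_inverse.self_of_nhds, ?_, ?_⟩
  · exact slice.eventually (φ_pt ▸ φ.leftFun_implicitFunction)
  · have lipschitz := (hP.hasStrictFDerivAt hr).isBigO_sub.comp_tendsto
      ((slice.comp π_tendsto).prodMk_nhds (hH.continuousAt.prodMk_nhds π_tendsto))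
    refine (lipschitz.congr' (left_inverse.mono fun x hx => ?_) .rfl).trans ?_
    · simp only [Function.comp_apply, hx]
    · exact .of_bound 1 (.of_forall fun x => by simp [Prod.norm_def, norm_sub_rev])

lemma fderiv_apply_fderiv_eq_zero_of_eventually_const {H : V → E} {Ψ : W → V} {e : E} {z : W}
    (hH : DifferentiableAt ℝ H (Ψ z)) (hΨ : DifferentiableAt ℝ Ψ z)
    (hconst : ∀ᶠ w in 𝓝 z, H (Ψ w) = e) (u : W) : fderiv ℝ H (Ψ z) (fderiv ℝ Ψ z u) = 0 := by
  have hcomp : H ∘ Ψ =ᶠ[𝓝 z] fun _ => e := hconst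
  rw [← ContinuousLinearMap.comp_apply, ← fderiv_comp z hH hΨ, hcomp.fderiv_eq]
  simp

end LevelSet

section Isotropic

variable {V W E : Type*} [NormedAddCommGroup V] [NormedSpace ℝ V]
  [NormedAddCommGroup W] [NormedSpace ℝ W] [NormedAddCommGroup E] [NormedSpace ℝ E]
  {k : ℕ} {Ψ : W → V} {γ : ℝ → W} {f : ℝ → V} {b : W} {b' : V}

lemma isLittleO_taylor_two_along_curve (hΨ : ContDiffAt ℝ 2 Ψ 0) (hγ : Tendsto γ (𝓝 0) (𝓝 0))
    (hk : k ≠ 0) (v : W) :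
    (fun t : ℝ => Ψ (γ t + t ^ k • v) - Ψ (γ t) - t ^ k • fderiv ℝ Ψ (γ t) v -
      (t ^ (2 * k) / 2) • fderiv ℝ (fderiv ℝ Ψ) 0 v v) =o[𝓝 0] fun t => t ^ (2 * k) := by
  have tendsto_pow_smul : Tendsto (fun t : ℝ => t ^ k • v) (𝓝 0) (𝓝 0) :=
    Continuous.tendsto' (by fun_prop) _ _ (by simp [hk])
  refine ((isLittleO_taylor_two hΨ).comp_tendsto (hγ.prodMk_nhds tendsto_pow_smul)).trans_isBigO
    (.of_bound (‖v‖ ^ 2) (.of_forall fun t => le_of_eq ?_)) |>.congr_left fun t => ?_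
  · simp only [Function.comp_apply, norm_smul, norm_pow, norm_mul, norm_norm]
    ring
  · simp only [Function.comp_apply, map_smul, FunLike.coe_smul, Pi.smul_apply, smul_smul]
    ring_nf

lemma isBigO_sub_of_symmetric_branches (hΨ : ContDiffAt ℝ 2 Ψ 0) (hγ : Tendsto γ (𝓝 0) (𝓝 0))
    (hk : k ≠ 0)
    (hplus : (fun t => Ψ (γ t + t ^ k • b) - (f t + t ^ k • b')) =o[𝓝 0] fun t => t ^ (2 * k))
    (hminus : (fun t => Ψ (γ t - t ^ k • b) - (f t - t ^ k • b')) =o[𝓝 0] fun t => t ^ (2 * k)) :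
    (fun t => Ψ (γ t) - f t) =O[𝓝 0] (fun t => t ^ (2 * k)) := by
  have taylor_plus := hplus.sub (isLittleO_taylor_two_along_curve hΨ hγ hk b)
  have taylor_minus := hminus.sub (by
    simpa [← sub_eq_add_neg] using isLittleO_taylor_two_along_curve hΨ hγ hk (-b))
  have quadratic : (fun t : ℝ => (t ^ (2 * k) / 2) • fderiv ℝ (fderiv ℝ Ψ) 0 b b)
      =O[𝓝 0] fun t => t ^ (2 * k) :=
    .of_bound ‖fderiv ℝ (fderiv ℝ Ψ) 0 b b‖ (.of_forall fun t => by
      rw [norm_smul, norm_div, mul_comm]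
      gcongr
      exact div_le_self (norm_nonneg _) (by norm_num))
  refine ((taylor_plus.add taylor_minus).const_smul_left (1 / 2 : ℝ)).isBigO.sub quadratic
    |>.congr_left fun t => ?_
  simp only [Pi.smul_apply]
  module

lemma isLittleO_pow_of_pow_smul {g : ℝ → V} {m : ℕ} (hm : m ≠ 0) (hg : ContinuousAt g 0)
    (h : (fun t => t ^ k • g t) =o[𝓝 0] fun t => t ^ k • t ^ m) :
    g =o[𝓝 0] fun t => t ^ m := by
  have punctured : g =o[𝓝[≠] 0] fun t => t ^ m := by
    refine isLittleO_iff.2 fun ε hε => ?_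
    filter_upwards [nhdsWithin_le_nhds (isLittleO_iff.1 h hε), self_mem_nhdsWithin] with t ht ht0
    rw [norm_smul, norm_smul, mul_left_comm] at ht
    exact le_of_mul_le_mul_left ht (norm_pos_iff.2 (pow_ne_zero k ht0))
  have tendsto_pow : Tendsto (fun t : ℝ => t ^ m) (𝓝[≠] 0) (𝓝 0) :=
    tendsto_nhdsWithin_of_tendsto_nhds (Continuous.tendsto' (by fun_prop) _ _ (by simp [hm]))
  have g_zero : g 0 = 0 :=
    tendsto_nhds_unique (hg.mono_left nhdsWithin_le_nhds) (punctured.trans_tendsto tendsto_pow)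
  rw [← nhdsNE_sup_pure]
  exact punctured.sup (isLittleO_pure.2 g_zero)

lemma isLittleO_fderiv_sub_of_symmetric_branches (hΨ : ContDiffAt ℝ 2 Ψ 0)
    (hγ : ContinuousAt γ 0) (hγ0 : γ 0 = 0) (hk : k ≠ 0)
    (hplus : (fun t => Ψ (γ t + t ^ k • b) - (f t + t ^ k • b')) =o[𝓝 0] fun t => t ^ (2 * k))
    (hminus : (fun t => Ψ (γ t - t ^ k • b) - (f t - t ^ k • b')) =o[𝓝 0] fun t => t ^ (2 * k)) :
    (fun t => fderiv ℝ Ψ (γ t) b - b') =o[𝓝 0] fun t => t ^ k := by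
  have hγ_tendsto : Tendsto γ (𝓝 0) (𝓝 0) := hγ0 ▸ hγ.tendsto
  have taylor_plus := hplus.sub (isLittleO_taylor_two_along_curve hΨ hγ_tendsto hk b)
  have taylor_minus := hminus.sub (by
    simpa [← sub_eq_add_neg] using isLittleO_taylor_two_along_curve hΨ hγ_tendsto hk (-b))
  have hcont : ContinuousAt (fun t => fderiv ℝ Ψ (γ t) b - b') 0 := by
    have hfderiv : ContinuousAt (fderiv ℝ Ψ) (γ 0) :=
      hγ0 ▸ (hΨ.fderiv_right (m := 0) (by norm_num)).continuousAt
    exact ((hfderiv.comp hγ).clm_apply continuousAt_const).sub continuousAt_const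
  refine isLittleO_pow_of_pow_smul hk hcont
    (((taylor_plus.sub taylor_minus).const_smul_left (1 / 2 : ℝ)).congr
      (fun t => ?_) fun t => by rw [smul_eq_mul]; ring)
  simp only [Pi.smul_apply]
  module

lemma contDiffAt_comp_curve (hΨ : ContDiffAt ℝ 1 Ψ 0) (hγ : ContDiffAt ℝ 1 γ 0) (hγ0 : γ 0 = 0) :
    ContDiffAt ℝ 1 (fun t => Ψ (γ t)) 0 :=
  ContDiffAt.comp 0 (hγ0 ▸ hΨ) hγ

/-- Isotropy replaces `b'` by the small vector `b' - DΨ(γ) b`, as the velocity is tangent too. -/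
lemma isLittleO_apply_deriv_of_isotropic {Ω : V →L[ℝ] V →L[ℝ] ℝ} (hΨ : ContDiffAt ℝ 1 Ψ 0)
    (hiso : ∀ᶠ z in 𝓝 0, ∀ u v, Ω (fderiv ℝ Ψ z u) (fderiv ℝ Ψ z v) = 0)
    (hγ : ContDiffAt ℝ 1 γ 0) (hγ0 : γ 0 = 0)
    (hb : (fun t => fderiv ℝ Ψ (γ t) b - b') =o[𝓝 0] fun t => t ^ k) :
    (fun t => Ω (deriv (fun s => Ψ (γ s)) t) b') =o[𝓝 0] fun t => t ^ k := by
  have hγ_tendsto : Tendsto γ (𝓝 0) (𝓝 0) := hγ0 ▸ hγ.continuousAt.tendsto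
  have velocity_bounded : (deriv fun s => Ψ (γ s)) =O[𝓝 0] fun _ => (1 : ℝ) :=
    (((contDiffAt_comp_curve hΨ hγ hγ0).fderiv_right (m := 0) (by norm_num)).continuousAt.clm_apply
      continuousAt_const).isBigO_one ℝ
  have pairing := (Ω.isBoundedBilinearMap.isBigO_comp (g := deriv fun s => Ψ (γ s))
    (h := fun t => fderiv ℝ Ψ (γ t) b - b')).trans_isLittleO
      (velocity_bounded.norm_left.mul_isLittleO hb.norm_left)
  refine (pairing.neg_left.congr_right fun t => one_mul _).congr' ?_ .rfl
  filter_upwards [hγ_tendsto.eventually hiso, hγ_tendsto.eventually (hΨ.eventually (by simp)),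
    hγ.eventually (by simp)] with t hiso_t hΨ_t hγ_t
  have velocity : deriv (fun s => Ψ (γ s)) t = fderiv ℝ Ψ (γ t) (deriv γ t) :=
    ((hΨ_t.differentiableAt one_ne_zero).hasFDerivAt.comp_hasDerivAt t
      (hγ_t.differentiableAt one_ne_zero).hasDerivAt).deriv
  simp [velocity, hiso_t]

lemma isLittleO_apply_of_isotropic_parametrization {Ω : V →L[ℝ] V →L[ℝ] ℝ}
    (hΨ : ContDiffAt ℝ 2 Ψ 0) (hΨ0 : Ψ 0 = 0)
    (hiso : ∀ᶠ z in 𝓝 0, ∀ u v, Ω (fderiv ℝ Ψ z u) (fderiv ℝ Ψ z v) = 0)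
    (hγ : ContDiffAt ℝ 1 γ 0) (hγ0 : γ 0 = 0) (hk : 2 ≤ k)
    (hplus : (fun t => Ψ (γ t + t ^ k • b) - (f t + t ^ k • b')) =o[𝓝 0] fun t => t ^ (2 * k))
    (hminus : (fun t => Ψ (γ t - t ^ k • b) - (f t - t ^ k • b')) =o[𝓝 0] fun t => t ^ (2 * k)) :
    (fun t => Ω (f t) b') =o[𝓝 0] fun t => t ^ (k + 1) := by
  have hΨ1 : ContDiffAt ℝ 1 Ψ 0 := hΨ.of_le one_le_two
  have even_part : (fun t => Ψ (γ t) - f t) =O[𝓝 0] fun t => t ^ (2 * k) :=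
    isBigO_sub_of_symmetric_branches hΨ (hγ0 ▸ hγ.continuousAt.tendsto) (by lia) hplus hminus
  have odd_part : (fun t => fderiv ℝ Ψ (γ t) b - b') =o[𝓝 0] fun t => t ^ k :=
    isLittleO_fderiv_sub_of_symmetric_branches hΨ hγ.continuousAt hγ0 (by lia) hplus hminus
  have hasDerivAt_pairing : ∀ᶠ t in 𝓝 0, HasDerivAt (fun t => Ω (Ψ (γ t)) b')
      (Ω (deriv (fun s => Ψ (γ s)) t) b') t := by
    filter_upwards [(contDiffAt_comp_curve hΨ1 hγ hγ0).eventually (by simp)] with t ht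
    exact (Ω.flip b').hasFDerivAt.comp_hasDerivAt t (ht.differentiableAt one_ne_zero).hasDerivAt
  have pairing : (fun t => Ω (Ψ (γ t)) b') =o[𝓝 0] fun t => t ^ (k + 1) := by
    simpa [hγ0, hΨ0] using isLittleO_pow_succ_of_hasDerivAt hasDerivAt_pairing
      (isLittleO_apply_deriv_of_isotropic hΨ1 hiso hγ hγ0 odd_part)
  have error : (fun t => Ω (Ψ (γ t) - f t) b') =o[𝓝 0] fun t => t ^ (k + 1) :=
    ((Ω.flip b').isBigO_comp _ _).trans even_part |>.trans_isLittleO (isLittleO_pow_pow (by lia))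
  simpa using pairing.sub error

lemma isLittleO_apply_of_isotropic_levelSet [CompleteSpace V] [FiniteDimensional ℝ E]
    {Ω : V →L[ℝ] V →L[ℝ] ℝ} {H : V → E} (hH : ContDiff ℝ 2 H) (hH0 : H 0 = 0)
    (hsurj : Function.Surjective (fderiv ℝ H 0))
    (hiso : ∀ᶠ x in 𝓝 0, H x = 0 → ∀ u v, fderiv ℝ H x u = 0 → fderiv ℝ H x v = 0 → Ω u v = 0)
    (hf : ContDiffAt ℝ 1 f 0) (hf0 : f 0 = 0) (hk : 2 ≤ k)
    (hplus : (fun t => H (f t + t ^ k • b')) =o[𝓝 0] fun t => t ^ (2 * k))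
    (hminus : (fun t => H (f t - t ^ k • b')) =o[𝓝 0] fun t => t ^ (2 * k)) :
    (fun t => Ω (f t) b') =o[𝓝 0] fun t => t ^ (k + 1) := by
  obtain ⟨Ψ, π, hΨ, hΨ0, hHΨ, hΨπ⟩ :=
    exists_levelSet_parametrization two_ne_zero hH.contDiffAt hsurj
  simp only [hH0, sub_zero] at hHΨ hΨπ
  have Ψ_tendsto : Tendsto Ψ (𝓝 0) (𝓝 0) := by
    simpa only [ContinuousAt, hΨ0] using hΨ.continuousAt
  have parametrization_iso : ∀ᶠ z in 𝓝 0, ∀ u v, Ω (fderiv ℝ Ψ z u) (fderiv ℝ Ψ z v) = 0 := by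
    filter_upwards [hHΨ.eventually_nhds, Ψ_tendsto.eventually hiso, hΨ.eventually (by simp)]
      with z hz hiso_z hΨ_z u v
    have tangent := fderiv_apply_fderiv_eq_zero_of_eventually_const
      (hH.contDiffAt.differentiableAt two_ne_zero) (hΨ_z.differentiableAt two_ne_zero) hz
    exact hiso_z hz.self_of_nhds _ _ (tangent u) (tangent v)
  have tendsto_branch (σ : ℝ) : Tendsto (fun t => f t + t ^ k • σ • b') (𝓝 0) (𝓝 0) := by
    have : ContinuousAt (fun t => f t + t ^ k • σ • b') 0 := hf.continuousAt.add (by fun_prop)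
    simpa [ContinuousAt, hf0, show k ≠ 0 by lia] using this
  have branch_plus := (hΨπ.comp_tendsto (tendsto_branch 1)).trans_isLittleO
    (by simpa [Function.comp_def] using hplus)
  have branch_minus := (hΨπ.comp_tendsto (tendsto_branch (-1))).trans_isLittleO
    (by simpa [Function.comp_def, ← sub_eq_add_neg] using hminus)
  refine isLittleO_apply_of_isotropic_parametrization (γ := fun t => π (f t)) (b := π b')
    hΨ hΨ0 parametrization_iso (π.contDiff.contDiffAt.comp 0 hf) (by simp [hf0]) hk ?_ ?_
  · simpa [Function.comp_def] using branch_plus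
  · simpa [Function.comp_def, ← sub_eq_add_neg] using branch_minus

end Isotropic

section VanishOrder

lemma isLittleO_pow_of_lt_vanishOrder {h : ℝ → ℝ} {m : ℕ} (hh : ContDiff ℝ m h) (h0 : h 0 = 0)
    (hm : m < vanishOrder h) : h =o[𝓝 0] fun t => t ^ m := by
  refine isLittleO_pow_of_iteratedDeriv_eq_zero hh fun k hk => ?_
  by_contra hne
  have one_le_k : 1 ≤ k := Nat.one_le_iff_ne_zero.2 fun hk0 => hne (by simp [hk0, h0])
  have vanishOrder_le : vanishOrder h ≤ k := sInf_le ⟨k, rfl, one_le_k, hne⟩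
  exact (hm.trans_le (vanishOrder_le.trans (by exact_mod_cast hk))).false

lemma vanishOrder_zero : vanishOrder (fun _ => 0) = ⊤ := by
  simp [vanishOrder]

lemma le_vanishOrder_const_mul_pow (c : ℝ) (k : ℕ) : k ≤ vanishOrder fun t => c * t ^ k := by
  refine le_sInf ?_
  rintro _ ⟨m, rfl, -, hm⟩
  rw [iteratedDeriv_const_mul_field, iteratedDeriv_fun_pow_zero] at hm
  by_contra hlt
  exact hm (by simp [show m ≠ k by rintro rfl; exact hlt le_rfl])

end VanishOrder

section SymplecticCoordinates

variable {n : ℕ} {i j : Fin n}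

/-- The index of the coordinate `pᵢ` in the ordering `(p₁, q₁, …, pₙ, qₙ)`; `i` counts from `0`. -/
def pIdx (i : Fin n) : Fin (2 * n) := ⟨2 * i, by lia⟩

/-- The index of the coordinate `qᵢ` in the ordering `(p₁, q₁, …, pₙ, qₙ)`; `i` counts from `0`. -/
def qIdx (i : Fin n) : Fin (2 * n) := ⟨2 * i + 1, by lia⟩

@[simp] lemma pIdx_inj : pIdx i = pIdx j ↔ i = j := by simp [pIdx, Fin.ext_iff]

@[simp] lemma qIdx_inj : qIdx i = qIdx j ↔ i = j := by simp [qIdx, Fin.ext_iff]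

@[simp] lemma pIdx_ne_qIdx : pIdx i ≠ qIdx j := by simp only [pIdx, qIdx, ne_eq, Fin.ext_iff]; lia

/-- The coordinate vector `∂/∂pᵢ`. -/
def pVec (i : Fin n) : Fin (2 * n) → ℝ := Pi.single (pIdx i) 1

/-- The coordinate vector `∂/∂qᵢ`. -/
def qVec (i : Fin n) : Fin (2 * n) → ℝ := Pi.single (qIdx i) 1

@[simp] lemma pVec_pIdx : pVec i (pIdx j) = if i = j then 1 else 0 := by
  simp [pVec, Pi.single_apply, eq_comm]

@[simp] lemma pVec_qIdx : pVec i (qIdx j) = 0 := by simp [pVec]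

@[simp] lemma qVec_pIdx : qVec i (pIdx j) = 0 := by simp [qVec]

@[simp] lemma qVec_qIdx : qVec i (qIdx j) = if i = j then 1 else 0 := by
  simp [qVec, Pi.single_apply, eq_comm]

lemma stdSymp_eq_sum (u v : Fin (2 * n) → ℝ) :
    stdSymp n u v = ∑ i, (u (pIdx i) * v (qIdx i) - u (qIdx i) * v (pIdx i)) := rfl

variable (n) in
/-- The standard symplectic form `stdSymp n` as a continuous bilinear map. -/
def stdSympCLM : (Fin (2 * n) → ℝ) →L[ℝ] (Fin (2 * n) → ℝ) →L[ℝ] ℝ :=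
  ∑ i : Fin n,
    ((ContinuousLinearMap.proj (R := ℝ) (φ := fun _ => ℝ) (pIdx i)).smulRight
        (ContinuousLinearMap.proj (R := ℝ) (φ := fun _ => ℝ) (qIdx i)) -
      (ContinuousLinearMap.proj (R := ℝ) (φ := fun _ => ℝ) (qIdx i)).smulRight
        (ContinuousLinearMap.proj (R := ℝ) (φ := fun _ => ℝ) (pIdx i)))

lemma stdSympCLM_apply (u v : Fin (2 * n) → ℝ) : stdSympCLM n u v = stdSymp n u v := by
  simp [stdSympCLM, stdSymp_eq_sum]

lemma stdSymp_smul_pVec (u : Fin (2 * n) → ℝ) (c : ℝ) (i : Fin n) :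
    stdSymp n u (c • pVec i) = -c * u (qIdx i) := by
  simp [stdSymp_eq_sum, mul_comm]

end SymplecticCoordinates

section LagrangianGerm

lemma surjective_pi_of_linearIndependent {ι 𝕜 V : Type*} [Finite ι] [NontriviallyNormedField 𝕜]
    [NormedAddCommGroup V] [NormedSpace 𝕜 V] {f : ι → V →L[𝕜] 𝕜} (hf : LinearIndependent 𝕜 f) :
    Function.Surjective (ContinuousLinearMap.pi f) := by
  let coeFn : (V →L[𝕜] 𝕜) →ₗ[𝕜] V → 𝕜 := LinearMap.ltoFun 𝕜 V 𝕜 𝕜 ∘ₗ ContinuousLinearMap.coeLM 𝕜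
  have hcoe : LinearIndependent 𝕜 fun i => ⇑(f i) :=
    hf.map' coeFn (LinearMap.ker_eq_bot.2 DFunLike.coe_injective)
  have hrange : Set.range (flip fun i => ⇑(f i)) = (ContinuousLinearMap.pi f).range := rfl
  rw [← span_flip_eq_top_iff_linearIndependent, hrange, Submodule.span_eq] at hcoe
  exact LinearMap.range_eq_top.1 hcoe

variable {n : ℕ} {L : LagrangianGerm n}

lemma isLittleO_pow_of_lt_tOrd {f : ℝ → Fin (2 * n) → ℝ} {m : ℕ} (hf : ContDiff ℝ m f)
    (hf0 : f 0 = 0) (hm : m < tOrd f L) :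
    (fun t i => L.H i (f t)) =o[𝓝 0] fun t => t ^ m :=
  isLittleO_pi.2 fun i => isLittleO_pow_of_lt_vanishOrder
    ((contDiff_infty.1 (L.smooth i) m).comp hf) (by simp [hf0, L.zero_at_zero])
    (hm.trans_le (iInf_le _ i))

lemma isLittleO_stdSymp_of_lt_tOrd {γ : ℝ → Fin (2 * n) → ℝ} {b : Fin (2 * n) → ℝ} {k : ℕ}
    (hγ : ContDiff ℝ (2 * k : ℕ) γ) (hγ0 : γ 0 = 0) (hk : 2 ≤ k)
    (hplus : (2 * k : ℕ) < tOrd (fun t => γ t + t ^ k • b) L)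
    (hminus : (2 * k : ℕ) < tOrd (fun t => γ t - t ^ k • b) L) :
    (fun t => stdSymp n (γ t) b) =o[𝓝 0] fun t => t ^ (k + 1) := by
  have smooth_H : ContDiff ℝ ∞ fun x i => L.H i x := contDiff_pi.2 L.smooth
  have fderiv_H (x) : fderiv ℝ (fun x i => L.H i x) x =
      ContinuousLinearMap.pi fun i => fderiv ℝ (L.H i) x :=
    fderiv_pi fun i => (L.smooth i).contDiffAt.differentiableAt (by simp)
  have hk0 : k ≠ 0 := by lia
  obtain ⟨U, hU, hU0, hL⟩ := L.lagrangian
  have hpow : ContDiff ℝ (2 * k : ℕ) fun t : ℝ => t ^ k • b := by fun_prop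
  simp only [← stdSympCLM_apply]
  refine isLittleO_apply_of_isotropic_levelSet (H := fun x i => L.H i x)
    (mod_cast contDiff_infty.1 smooth_H 2) (funext L.zero_at_zero) ?_ ?_
    (hγ.contDiffAt.of_le (by exact_mod_cast (by lia : 1 ≤ 2 * k))) hγ0 hk
    (isLittleO_pow_of_lt_tOrd (hγ.add hpow) (by simp [hγ0, hk0]) hplus)
    (isLittleO_pow_of_lt_tOrd (hγ.sub hpow) (by simp [hγ0, hk0]) hminus)
  · rw [fderiv_H]
    exact surjective_pi_of_linearIndependent (hL 0 hU0 L.zero_at_zero).1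
  · filter_upwards [hU.mem_nhds hU0] with x hx hHx u v hu hv
    rw [fderiv_H] at hu hv
    rw [stdSympCLM_apply]
    exact (hL x hx (congrFun hHx)).2 u v (congrFun hu) (congrFun hv)

end LagrangianGerm

section GradientGraph

variable {n : ℕ}

/-- The projection `(p₁, q₁, …, pₙ, qₙ) ↦ (p₁, …, pₙ)`. -/
def pProj (n : ℕ) : (Fin (2 * n) → ℝ) →L[ℝ] (Fin n → ℝ) :=
  ContinuousLinearMap.pi fun i => ContinuousLinearMap.proj (pIdx i)

@[simp] lemma pProj_apply (x : Fin (2 * n) → ℝ) (i : Fin n) : pProj n x i = x (pIdx i) := rfl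

@[simp] lemma pProj_qVec (i : Fin n) : pProj n (qVec i) = 0 := by ext; simp

lemma hasFDerivAt_sub_gradient {S : (Fin n → ℝ) → ℝ} (hS : ContDiff ℝ 2 S) (i : Fin n)
    (x : Fin (2 * n) → ℝ) :
    HasFDerivAt (fun y => y (qIdx i) - fderiv ℝ S (pProj n y) (Pi.single i 1))
      (ContinuousLinearMap.proj (qIdx i) -
        (fderiv ℝ (fderiv ℝ S) (pProj n x)).flip (Pi.single i 1) ∘L pProj n) x := by
  have hS' : HasFDerivAt (fderiv ℝ S) (fderiv ℝ (fderiv ℝ S) (pProj n x)) (pProj n x) :=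
    ((hS.fderiv_right (m := 1) (by norm_num)).differentiable one_ne_zero _).hasFDerivAt
  refine (hasFDerivAt_apply (qIdx i) x).sub
    (((hS'.comp x (pProj n).hasFDerivAt).clm_apply (hasFDerivAt_const _ x)).congr_fderiv ?_)
  ext u
  simp

lemma stdSymp_eq_zero_of_symm {A : (Fin n → ℝ) →L[ℝ] (Fin n → ℝ) →L[ℝ] ℝ}
    (hA : ∀ a b, A a b = A b a) {u v : Fin (2 * n) → ℝ}
    (hu : ∀ i, u (qIdx i) = A (pProj n u) (Pi.single i 1))
    (hv : ∀ i, v (qIdx i) = A (pProj n v) (Pi.single i 1)) : stdSymp n u v = 0 := by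
  have expand (a b : Fin n → ℝ) : ∑ i, b i * A a (Pi.single i 1) = A a b := by
    conv_rhs => rw [pi_eq_sum_univ' b, map_sum]
    simp
  calc
    stdSymp n u v = A (pProj n v) (pProj n u) - A (pProj n u) (pProj n v) := by
      rw [← expand (pProj n v), ← expand (pProj n u), stdSymp_eq_sum, Finset.sum_sub_distrib]
      simp only [hu, hv, pProj_apply, mul_comm]
    _ = 0 := sub_eq_zero.2 (hA _ _)

/-- The Lagrangian germ `q = dS(p)` generated by a smooth function `S` with `dS(0) = 0`. -/
def gradientGraph (S : (Fin n → ℝ) → ℝ) (hS : ContDiff ℝ ∞ S) (hS0 : fderiv ℝ S 0 = 0) :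
    LagrangianGerm n where
  H i x := x (qIdx i) - fderiv ℝ S (pProj n x) (Pi.single i 1)
  smooth i := (contDiff_apply ℝ ℝ (qIdx i)).sub
    (((hS.fderiv_right (by simp)).comp (pProj n).contDiff).clm_apply contDiff_const)
  zero_at_zero i := by simp [hS0]
  lagrangian := by
    have hS2 : ContDiff ℝ 2 S := mod_cast contDiff_infty.1 hS 2
    refine ⟨Set.univ, isOpen_univ, trivial, fun x _ _ => ?_⟩
    simp only [(hasFDerivAt_sub_gradient hS2 _ x).fderiv]
    constructor
    · refine Fintype.linearIndependent_iff.2 fun c hc j => ?_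
      simpa using DFunLike.congr_fun hc (qVec j)
    · intro u v hu hv
      exact stdSymp_eq_zero_of_symm (hS2.contDiffAt.isSymmSndFDerivAt (by simp))
        (fun i => sub_eq_zero.1 (hu i)) fun i => sub_eq_zero.1 (hv i)

end GradientGraph

section CubicGraph

variable {n : ℕ} {i j : Fin n}

lemma hasFDerivAt_mul_cube (i j : Fin n) (p : Fin n → ℝ) :
    HasFDerivAt (fun p : Fin n → ℝ => 1 / 3 * (p i * p j ^ 3))
      ((1 / 3 * p j ^ 3) • ContinuousLinearMap.proj i +
        (p i * p j ^ 2) • ContinuousLinearMap.proj (R := ℝ) (φ := fun _ => ℝ) j) p := by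
  refine (((hasFDerivAt_apply i p).mul ((hasFDerivAt_apply j p).pow 3)).const_mul
    (1 / 3)).congr_fderiv ?_
  ext u
  simp only [Nat.add_one_sub_one, nsmul_eq_mul, Nat.cast_ofNat, add_apply, smul_apply,
    ContinuousLinearMap.proj_apply, smul_eq_mul]
  ring

/-- The Lagrangian germ generated by `S = pᵢ pⱼ³ / 3`. -/
def cubicGraph (i j : Fin n) : LagrangianGerm n :=
  gradientGraph (fun p => 1 / 3 * (p i * p j ^ 3)) (by fun_prop)
    (by rw [(hasFDerivAt_mul_cube i j 0).fderiv]; simp)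

lemma cubicGraph_H (i j l : Fin n) (x : Fin (2 * n) → ℝ) :
    (cubicGraph i j).H l x = x (qIdx l) - (1 / 3 * x (pIdx j) ^ 3 * (if i = l then 1 else 0) +
      x (pIdx i) * x (pIdx j) ^ 2 * (if j = l then 1 else 0)) := by
  simp only [cubicGraph, gradientGraph, (hasFDerivAt_mul_cube i j _).fderiv]
  simp [Pi.single_apply]

end CubicGraph

section Branches

variable {n : ℕ} {i j : Fin n}

/-- The curve `pᵢ = t³`, `pₗ = -t²`; the branch `C₁` for `(i, l) = (0, 1)`. -/
def branchC (i l : Fin n) (t : ℝ) : Fin (2 * n) → ℝ := t ^ 3 • pVec i - t ^ 2 • pVec l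

/-- The curve `pᵢ = σ t²`, `qᵢ = t³ / 3`, `pⱼ = t`; the branches `B₊`, `B₋` for `(i, j) = (0, 2)`
and `σ = 1`, `σ = -1`. -/
def branchB (i j : Fin n) (σ t : ℝ) : Fin (2 * n) → ℝ :=
  t • pVec j + (1 / 3 * t ^ 3) • qVec i + t ^ 2 • σ • pVec i

lemma branchC_apply {l : Fin n} (hil : i ≠ l) (t : ℝ) (m : Fin (2 * n)) :
    branchC i l t m =
      if (m : ℕ) = 2 * i then t ^ 3 else if (m : ℕ) = 2 * l then -t ^ 2 else 0 := by
  simp only [branchC, pVec, pIdx, Pi.sub_apply, Pi.smul_apply, Pi.single_apply, Fin.ext_iff,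
    smul_eq_mul]
  grind

lemma branchB_apply (hij : i ≠ j) (σ t : ℝ) (m : Fin (2 * n)) :
    branchB i j σ t m =
      if (m : ℕ) = 2 * i then σ * t ^ 2 else if (m : ℕ) = 2 * i + 1 then 1 / 3 * t ^ 3
      else if (m : ℕ) = 2 * j then t else 0 := by
  simp only [branchB, pVec, qVec, pIdx, qIdx, Pi.add_apply, Pi.smul_apply, Pi.single_apply,
    Fin.ext_iff, smul_eq_mul]
  grind

lemma tOrd_branchC_cubicGraph {l : Fin n} (hi : i ≠ j) (hl : l ≠ j) :
    tOrd (branchC i l) (cubicGraph i j) = ⊤ := by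
  refine iInf_eq_top.2 fun m => ?_
  simpa [cubicGraph_H, branchC, hi, hl] using vanishOrder_zero

lemma four_le_tOrd_branchB_cubicGraph (hij : i ≠ j) (σ : ℝ) :
    4 ≤ tOrd (branchB i j σ) (cubicGraph i j) := by
  refine le_iInf fun l => ?_
  have hH (t : ℝ) : (cubicGraph i j).H l (branchB i j σ t) =
      (if j = l then -σ else 0) * t ^ 4 := by
    simp only [cubicGraph_H, branchB, Pi.add_apply, Pi.smul_apply, pVec_qIdx, qVec_qIdx, pVec_pIdx,
      qVec_pIdx, smul_eq_mul, hij, hij.symm, if_false]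
    grind
  simp only [hH]
  exact le_vanishOrder_const_mul_pow _ 4

lemma min_tOrd_branchB_le_four {σ : ℝ} (hσ : σ ≠ 0) (L : LagrangianGerm n) :
    min (tOrd (branchB i j σ) L) (tOrd (branchB i j (-σ)) L) ≤ 4 := by
  by_contra! hlt
  obtain ⟨hplus, hminus⟩ := lt_min_iff.1 hlt
  have branchB_neg : branchB i j (-σ) =
      fun t => t • pVec j + (1 / 3 * t ^ 3) • qVec i - t ^ 2 • σ • pVec i := by
    ext t
    simp [branchB, sub_eq_add_neg]
  have pairing := isLittleO_stdSymp_of_lt_tOrd (b := σ • pVec i) (by fun_prop) (by simp) le_rfl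
    hplus (branchB_neg ▸ hminus)
  have pow_three_isLittleO_self : (fun t : ℝ => t ^ 3) =o[𝓝 0] fun t => t ^ 3 := by
    refine (pairing.const_mul_left (-3 / σ)).congr_left fun t => ?_
    simp only [stdSymp_smul_pVec, Pi.add_apply, Pi.smul_apply, pVec_qIdx, qVec_qIdx, if_true,
      smul_eq_mul]
    field_simp
    ring
  have ne_zero : ∀ᶠ t : ℝ in 𝓝[≠] 0, t ^ 3 ≠ 0 :=
    eventually_mem_nhdsWithin.mono fun t ht => pow_ne_zero 3 ht
  exact isLittleO_irrefl (ne_zero.frequently.filter_mono nhdsWithin_le_nhds)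
    pow_three_isLittleO_self

end Branches

/-- Lagrangian tangency orders for the class `(T₈)^{6,2}`. -/
theorem T8_62_lagrangian_tangency_orders
    (n : ℕ) (hn : 3 ≤ n)
    (C₁ Bp Bm : ℝ → Fin (2 * n) → ℝ)
    (hC₁ : C₁ = fun (t : ℝ) (j : Fin (2 * n)) => if (j : ℕ) = 0 then t ^ 3 else if (j : ℕ) = 2 then -t ^ 2 else (0 : ℝ))
    (hBp : Bp = fun (t : ℝ) (j : Fin (2 * n)) => if (j : ℕ) = 0 then t ^ 2 else if (j : ℕ) = 1 then (1 / 3) * t ^ 3 else if (j : ℕ) = 4 then t else (0 : ℝ))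
    (hBm : Bm = fun (t : ℝ) (j : Fin (2 * n)) => if (j : ℕ) = 0 then -t ^ 2 else if (j : ℕ) = 1 then (1 / 3) * t ^ 3 else if (j : ℕ) = 4 then t else (0 : ℝ)) :
    Lt3 C₁ Bp Bm = 4 ∧ Lt1 C₁ = ⊤ ∧ Lt2 Bp Bm = 4 := by
  let i : Fin n := ⟨0, by lia⟩
  let l : Fin n := ⟨1, by lia⟩
  let j : Fin n := ⟨2, by lia⟩
  have hij : i ≠ j := by simp [i, j]
  have hil : i ≠ l := by simp [i, l]
  have hlj : l ≠ j := by simp [l, j]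
  have C_eq : C₁ = branchC i l := by ext t m; simp [hC₁, branchC_apply hil, i, l]
  have Bp_eq : Bp = branchB i j 1 := by ext t m; simp [hBp, branchB_apply hij, i, j]
  have Bm_eq : Bm = branchB i j (-1) := by ext t m; simp [hBm, branchB_apply hij, i, j]
  rw [C_eq, Bp_eq, Bm_eq]
  have upper (L : LagrangianGerm n) :
      min (tOrd (branchB i j 1) L) (tOrd (branchB i j (-1)) L) ≤ 4 :=
    min_tOrd_branchB_le_four one_ne_zero L
  have lower : 4 ≤ min (tOrd (branchB i j 1) (cubicGraph i j))
      (tOrd (branchB i j (-1)) (cubicGraph i j)) :=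
    le_min (four_le_tOrd_branchB_cubicGraph hij 1) (four_le_tOrd_branchB_cubicGraph hij (-1))
  have tOrd_C : tOrd (branchC i l) (cubicGraph i j) = ⊤ := tOrd_branchC_cubicGraph hij hlj
  refine ⟨le_antisymm (iSup_le fun L => (min_le_right _ _).trans (upper L)) ?_, ?_,
    le_antisymm (iSup_le upper) (le_iSup_of_le (cubicGraph i j) lower)⟩
  · exact le_iSup_of_le (cubicGraph i j) (le_min (tOrd_C ▸ le_top) lower)
  · exact top_le_iff.1 (le_iSup_of_le (cubicGraph i j) tOrd_C.ge)

end
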